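/- arXiv:1603.06493 — 3 statements merged into one kernel-verified Lean document; each statement's English description precedes it below -/
import Mathlib

section
/- Let A = (a_{ij}) be an N×N real matrix all of whose principal minors are positive, i.e. for every nonempty index set I = {i_1 < … < i_r} ⊆ {1,…,N} one has det((a_{i_k i_l})_{k,l=1}^r) > 0. Then the only vector u ∈ ℝ^N satisfying u_i ≥ 0 for all i and Σ_{j=1}^N a_{ij} u_j ≤ 0 for all i is u = 0. -/
/-!
If `u i * (A u) i ≤ 0` for all `i`, then `u` is annihilated by the matrix `D₁ A + D₂`, where `D₁`
and `D₂` are the nonnegative diagonal matrices with entries `u i ^ 2` and `-(u i * (A u) i)`; the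
entries of `D₂` off the support of `u` do not matter and may be taken to be `1`. Expanding
`det (D₁ A + D₂)` by multilinearity in the rows gives a combination of the principal minors of `A`
with nonnegative coefficients, in which the minor on the support of `u` has a positive one. Hence
`D₁ A + D₂` is nonsingular and `u = 0`.
-/

open Matrix

variable {n R : Type*} [DecidableEq n] [CommRing R]

theorem det_diagonal_mul_add_diagonal [Fintype n] (A : Matrix n n R) (c d : n → R) :
    (diagonal c * A + diagonal d).det =
      ∑ s : Finset n, (∏ i ∈ s, c i) * (∏ i ∈ sᶜ, d i) * (A.submatrix ((↑) : s → n) (↑)).det := by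
  have rows_piecewise (s : Finset n) :
      s.piecewise (diagonal c * A) (diagonal d) =
        diagonal (s.piecewise c d) * of (s.piecewise A.row (1 : Matrix n n R).row) := by
    ext i j
    by_cases hi : i ∈ s <;> simp [Finset.piecewise, hi, diagonal_apply, one_apply]
  calc (diagonal c * A + diagonal d).det
      = ∑ s : Finset n, det (s.piecewise (diagonal c * A) (diagonal d)) :=
        detRowAlternating.toMultilinearMap.map_add_univ _ _
    _ = _ := Finset.sum_congr rfl fun s _ => by
        rw [rows_piecewise, det_mul, det_diagonal, det_piecewise_one_eq_submatrix_det,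
          Finset.prod_piecewise, Finset.univ_inter, ← Finset.compl_eq_univ_sdiff]

/-- A square matrix is a *P-matrix* if all its principal minors are positive. Only nonempty index
sets are constrained; the empty minor is `1`. -/
def IsPMatrix [PartialOrder R] (A : Matrix n n R) : Prop :=
  ∀ s : Finset n, s.Nonempty → 0 < (A.submatrix ((↑) : s → n) (↑)).det

namespace IsPMatrix

variable [PartialOrder R] [IsStrictOrderedRing R] {A : Matrix n n R}

theorem det_submatrix_pos (hA : IsPMatrix A) (s : Finset n) :
    0 < (A.submatrix ((↑) : s → n) (↑)).det := by
  rcases s.eq_empty_or_nonempty with rfl | hs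
  · simp
  · exact hA s hs

theorem det_diagonal_mul_add_diagonal_pos [Fintype n] (hA : IsPMatrix A)
    {c d : n → R} (hc : ∀ i, 0 ≤ c i) (hd : ∀ i, 0 ≤ d i) (hcd : ∀ i, c i = 0 → 0 < d i) :
    0 < (diagonal c * A + diagonal d).det := by
  classical
  have term_nonneg (s : Finset n) :
      0 ≤ (∏ i ∈ s, c i) * (∏ i ∈ sᶜ, d i) * (A.submatrix ((↑) : s → n) (↑)).det :=
    mul_nonneg (mul_nonneg (Finset.prod_nonneg fun i _ => hc i)
      (Finset.prod_nonneg fun i _ => hd i)) (hA.det_submatrix_pos s).le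
  let supp : Finset n := {i | c i ≠ 0}
  have prod_c_pos : 0 < ∏ i ∈ supp, c i :=
    Finset.prod_pos fun i hi => (hc i).lt_of_ne' (by simpa [supp] using hi)
  have prod_d_pos : 0 < ∏ i ∈ suppᶜ, d i :=
    Finset.prod_pos fun i hi => hcd i (by simpa [supp] using hi)
  rw [det_diagonal_mul_add_diagonal]
  exact Finset.sum_pos' (fun s _ => term_nonneg s) ⟨supp, Finset.mem_univ _,
    mul_pos (mul_pos prod_c_pos prod_d_pos) (hA.det_submatrix_pos supp)⟩

end IsPMatrix

theorem positive_principal_minors_imp_trivial_nonneg_solution_general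
    [Fintype n] [LinearOrder R] [IsStrictOrderedRing R]
    {A : Matrix n n R} (hA : IsPMatrix A) {u : n → R} (hu : ∀ i, u i * (A *ᵥ u) i ≤ 0) :
    u = 0 := by
  let d : n → R := fun i => if u i = 0 then 1 else -(u i * (A *ᵥ u) i)
  have d_nonneg (i : n) : 0 ≤ d i := by
    by_cases hi : u i = 0 <;> simp [d, hi, hu i]
  have d_pos (i : n) (hi : u i ^ 2 = 0) : 0 < d i := by
    simp [d, pow_eq_zero_iff two_ne_zero |>.1 hi]
  have mulVec_eq_zero : (diagonal (fun i => u i ^ 2) * A + diagonal d) *ᵥ u = 0 := by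
    ext i
    rw [add_mulVec, ← mulVec_mulVec, Pi.add_apply, mulVec_diagonal, mulVec_diagonal, Pi.zero_apply]
    by_cases hi : u i = 0
    · simp [hi]
    · simp only [d, if_neg hi]
      ring
  exact eq_zero_of_mulVec_eq_zero
    (hA.det_diagonal_mul_add_diagonal_pos (fun i => sq_nonneg (u i)) d_nonneg d_pos).ne'
    mulVec_eq_zero

/-- If all principal minors of the `N × N` real matrix `A` are positive, then the only
nonnegative vector `u` with `A u ≤ 0` componentwise is `u = 0`. -/
theorem positive_principal_minors_imp_trivial_nonneg_solution {N : ℕ}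
    (A : Matrix (Fin N) (Fin N) ℝ)
    (hA : ∀ I : Finset (Fin N), I.Nonempty →
      0 < Matrix.det (Matrix.of fun i j : {x : Fin N // x ∈ I} => A i.1 j.1))
    (u : Fin N → ℝ) (hu : ∀ i, 0 ≤ u i) (hAu : ∀ i, ∑ j, A i j * u j ≤ 0) :
    u = 0 :=
  positive_principal_minors_imp_trivial_nonneg_solution_general hA fun i =>
    mul_nonpos_of_nonneg_of_nonpos (hu i) (hAu i)
end

section
/- For every ε > 0 there exists δ > 0, depending only on ε, N, p and κ, such that for every admissible pair (A, m) with constant κ and every u ∈ ℝ^N with u ≥ 0, g(u) ≠ 0 and Σ_{i=1}^N u_i |f_i(u)|^p ≤ δ g(u), one has min_{∅ ≠ I ⊆ {1,…,N}} |u − u_I| ≤ ε. In other words, min_{I ≠ ∅} |u − u_I| → 0 as v(u) → 0 over nonnegative u, uniformly with respect to admissible coefficients. -/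
/-!
For a set `I` of coordinates, replace the rows of `A` indexed by `I` with rows of the identity. The
resulting matrix `B` has determinant `Δ_{Iᶜ} ≥ κ`, so `B⁻¹` is bounded uniformly in `A` and `I` by
Cramer's rule. It sends `u - u_I` to the vector with entries `u_i` on `I` and `-f_j(u)` off `I`,
hence `u` is close to `u_I` as soon as these entries are small.

Take `I = {i | u_i ≤ η}`. If `v(u)` is small, then `|f_j(u)| ≤ η max |f|` for every `j ∉ I`; in
particular an index at which `|f|` is maximal lies in `I`. Since `f` is Lipschitz and `u_I` is
bounded, `max |f|` is at most a constant plus a multiple of `|u - u_I|`, and for small `η` that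
multiple is absorbed.
-/

open MeasureTheory Filter

/-- Principal minor of `A` over the index set `I`. -/
noncomputable def minorP {N : ℕ} (A : Matrix (Fin N) (Fin N) ℝ) (I : Finset (Fin N)) : ℝ :=
  Matrix.det (Matrix.of fun i j : {x : Fin N // x ∈ I} => A i.1 j.1)

/-- The determinant `Δ_{I,j}` obtained by bordering the principal minor over `I`
with the column `m` and the row `j`. -/
noncomputable def minorM {N : ℕ} (A : Matrix (Fin N) (Fin N) ℝ) (m : Fin N → ℝ)
    (I : Finset (Fin N)) (j : Fin N) : ℝ :=
  Matrix.det (Matrix.of fun k l : Option {x : Fin N // x ∈ I} =>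
    match k, l with
    | some k', some l' => A k'.1 l'.1
    | some k', none => m k'.1
    | none, some l' => A j l'.1
    | none, none => m j)

/-- An admissible pair of coefficients with constant `κ`:
entries of `A` and `m` bounded by `1/κ`, all principal minors `Δ_I ≥ κ`,
and all bordered determinants `Δ_{I,j} ≥ κ` for `j ∉ I`. -/
def IsAdmissible {N : ℕ} (κ : ℝ) (A : Matrix (Fin N) (Fin N) ℝ) (m : Fin N → ℝ) : Prop :=
  (∀ i j, |A i j| ≤ 1 / κ) ∧ (∀ i, m i ≤ 1 / κ) ∧
    (∀ I : Finset (Fin N), κ ≤ minorP A I) ∧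
    (∀ I : Finset (Fin N), ∀ j ∉ I, κ ≤ minorM A m I j)

/-- `f_i(u) = m_i − Σ_j a_{ij} u_j`. -/
def fComp {N : ℕ} (A : Matrix (Fin N) (Fin N) ℝ) (m : Fin N → ℝ) (u : Fin N → ℝ)
    (i : Fin N) : ℝ :=
  m i - ∑ j, A i j * u j

section

open scoped Matrix Nat

section MatrixBounds

variable {ι : Type*} [Fintype ι]

lemma norm_mulVec_le {l R : Type*} [Fintype l] [NonUnitalSeminormedRing R]
    {B : Matrix l ι R} {K : ℝ} (hK : 0 ≤ K) (hB : ∀ i j, ‖B i j‖ ≤ K) (x : ι → R) :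
    ‖B *ᵥ x‖ ≤ Fintype.card ι * K * ‖x‖ := by
  refine (pi_norm_le_iff_of_nonneg (by positivity)).2 fun i => ?_
  calc ‖∑ j, B i j * x j‖ ≤ ∑ j, ‖B i j * x j‖ := norm_sum_le _ _
    _ ≤ ∑ _j : ι, K * ‖x‖ := by
      gcongr with j
      exact (norm_mul_le _ _).trans (mul_le_mul (hB i j) (norm_le_pi_norm x j) (norm_nonneg _) hK)
    _ = Fintype.card ι * K * ‖x‖ := by simp [mul_assoc]

variable [DecidableEq ι]

lemma abs_adjugate_apply_le {R : Type*} [CommRing R] [LinearOrder R] [IsStrictOrderedRing R]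
    {B : Matrix ι ι R} {K : R} (hK : 1 ≤ K) (hB : ∀ i j, |B i j| ≤ K) (i j : ι) :
    |B.adjugate i j| ≤ (Fintype.card ι)! * K ^ Fintype.card ι := by
  have h_entries (k l : ι) : |B.updateRow j (Pi.single i 1) k l| ≤ K := by
    rcases eq_or_ne k j with rfl | hk
    · rw [Matrix.updateRow_self, Pi.single_apply]
      split_ifs
      · rwa [abs_one]
      · rw [abs_zero]
        exact zero_le_one.trans hK
    · rw [Matrix.updateRow_ne hk]
      exact hB k l
  rw [Matrix.adjugate_apply, ← nsmul_eq_mul]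
  exact Matrix.det_le (abv := AbsoluteValue.abs) h_entries

/-- Bound for the sup-norm of the inverse of an `n × n` matrix with entries at most `K ≥ 1` in
absolute value and determinant at least `κ`, read off the adjugate formula. -/
noncomputable def inverseBound (n : ℕ) (κ K : ℝ) : ℝ :=
  n * (n ! * K ^ n) / κ

lemma inverseBound_nonneg (n : ℕ) {κ K : ℝ} (hκ : 0 ≤ κ) (hK : 0 ≤ K) :
    0 ≤ inverseBound n κ K := by
  unfold inverseBound
  positivity

lemma norm_le_inverseBound_mul_norm_mulVec {B : Matrix ι ι ℝ} {κ K : ℝ} (hκ : 0 < κ) (hK : 1 ≤ K)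
    (hB : ∀ i j, |B i j| ≤ K) (hdet : κ ≤ B.det) (x : ι → ℝ) :
    ‖x‖ ≤ inverseBound (Fintype.card ι) κ K * ‖B *ᵥ x‖ := by
  have hcramer : B.adjugate *ᵥ (B *ᵥ x) = B.det • x := by
    rw [Matrix.mulVec_mulVec, Matrix.adjugate_mul, Matrix.smul_mulVec, Matrix.one_mulVec]
  have : 0 ≤ K := zero_le_one.trans hK
  rw [inverseBound, div_mul_eq_mul_div, le_div_iff₀' hκ]
  calc κ * ‖x‖ ≤ ‖B.det‖ * ‖x‖ := by
        gcongr
        exact hdet.trans (le_abs_self _)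
    _ = ‖B.adjugate *ᵥ (B *ᵥ x)‖ := by rw [hcramer, norm_smul]
    _ ≤ _ := norm_mulVec_le (by positivity) (abs_adjugate_apply_le hK hB) _

end MatrixBounds

section FaceEquilibrium

variable {ι R : Type*} [Fintype ι] [DecidableEq ι] [CommRing R]

/-- The point `u_I`: `w` vanishes on `I` and `f(w) = m - A w` vanishes off `I`. -/
def IsFaceEquilibrium (A : Matrix ι ι R) (m : ι → R) (I : Finset ι) (w : ι → R) : Prop :=
  (∀ i ∈ I, w i = 0) ∧ ∀ j ∉ I, (m - A *ᵥ w) j = 0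

/-- The matrix of the linear system defining `u_I`: the rows of `A` indexed by `I` are replaced
with rows of the identity. -/
def faceMatrix (A : Matrix ι ι R) (I : Finset ι) : Matrix ι ι R :=
  Matrix.of (Iᶜ.piecewise A.row (1 : Matrix ι ι R).row)

lemma det_faceMatrix (A : Matrix ι ι R) (I : Finset ι) :
    (faceMatrix A I).det = (A.submatrix (↑) (↑) : Matrix ↥Iᶜ ↥Iᶜ R).det :=
  Matrix.det_piecewise_one_eq_submatrix_det A Iᶜ

lemma faceMatrix_row_of_mem (A : Matrix ι ι R) {I : Finset ι} {i : ι} (hi : i ∈ I) :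
    faceMatrix A I i = (1 : Matrix ι ι R) i :=
  Finset.piecewise_eq_of_notMem Iᶜ A.row (1 : Matrix ι ι R).row (by simpa using hi)

lemma faceMatrix_row_of_notMem (A : Matrix ι ι R) {I : Finset ι} {i : ι} (hi : i ∉ I) :
    faceMatrix A I i = A i :=
  Finset.piecewise_eq_of_mem Iᶜ A.row (1 : Matrix ι ι R).row (by simpa using hi)

lemma faceMatrix_mulVec (A : Matrix ι ι R) (I : Finset ι) (x : ι → R) :
    faceMatrix A I *ᵥ x = I.piecewise x (A *ᵥ x) := by
  ext i
  by_cases hi : i ∈ I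
  · calc (faceMatrix A I *ᵥ x) i = ((1 : Matrix ι ι R) *ᵥ x) i :=
          congrArg (· ⬝ᵥ x) (faceMatrix_row_of_mem A hi)
      _ = I.piecewise x (A *ᵥ x) i := by simp [hi]
  · calc (faceMatrix A I *ᵥ x) i = (A *ᵥ x) i :=
          congrArg (· ⬝ᵥ x) (faceMatrix_row_of_notMem A hi)
      _ = I.piecewise x (A *ᵥ x) i := by simp [hi]

lemma abs_faceMatrix_apply_le [LinearOrder R] [IsStrictOrderedRing R] {A : Matrix ι ι R} {K : R}
    (hK : 1 ≤ K) (hA : ∀ i j, |A i j| ≤ K) (I : Finset ι) (i j : ι) :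
    |faceMatrix A I i j| ≤ K := by
  by_cases hi : i ∈ I
  · have hone : |(1 : Matrix ι ι R) i j| ≤ 1 := by
      rw [Matrix.one_apply]
      split_ifs <;> simp
    rw [faceMatrix_row_of_mem A hi]
    exact hone.trans hK
  · rw [faceMatrix_row_of_notMem A hi]
    exact hA i j

/-- The constant `Λ` in the estimate `‖u - u_I‖ ≤ Λ η` for points with `|u_i| ≤ η` on `I` and
`|f_j(u)| ≤ η ‖f(u)‖` off `I`. The factor `2` pays for absorbing the dependence of `‖f(u)‖` on
`‖u - u_I‖`. -/
noncomputable def stabilityConstant (n : ℕ) (κ K : ℝ) : ℝ :=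
  2 * inverseBound n κ K * (1 + K + n * K * (1 + inverseBound n κ K * K))

lemma stabilityConstant_nonneg (n : ℕ) {κ K : ℝ} (hκ : 0 ≤ κ) (hK : 0 ≤ K) :
    0 ≤ stabilityConstant n κ K := by
  have := inverseBound_nonneg n hκ hK
  unfold stabilityConstant
  positivity

namespace IsFaceEquilibrium

lemma faceMatrix_mulVec_sub {A : Matrix ι ι R} {m w : ι → R} {I : Finset ι}
    (hw : IsFaceEquilibrium A m I w) (u : ι → R) :
    faceMatrix A I *ᵥ (u - w) = I.piecewise u (-(m - A *ᵥ u)) := by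
  rw [faceMatrix_mulVec]
  ext i
  by_cases hi : i ∈ I
  · simp [hi, hw.1 i hi]
  · have hm : m i = (A *ᵥ w) i := sub_eq_zero.1 (hw.2 i hi)
    simp [hi, hm, Matrix.mulVec_sub]

variable {A : Matrix ι ι ℝ} {m w : ι → ℝ} {I : Finset ι} {κ K : ℝ}

lemma norm_sub_le_of_abs_le {u : ι → ℝ} {r : ℝ} (hw : IsFaceEquilibrium A m I w) (hκ : 0 < κ)
    (hK : 1 ≤ K) (hA : ∀ i j, |A i j| ≤ K)
    (hdet : κ ≤ (A.submatrix (↑) (↑) : Matrix ↥Iᶜ ↥Iᶜ ℝ).det)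
    (hr : 0 ≤ r) (hu : ∀ i ∈ I, |u i| ≤ r) (hf : ∀ j ∉ I, |(m - A *ᵥ u) j| ≤ r) :
    ‖u - w‖ ≤ inverseBound (Fintype.card ι) κ K * r := by
  have hresidual : ‖faceMatrix A I *ᵥ (u - w)‖ ≤ r := by
    rw [hw.faceMatrix_mulVec_sub, pi_norm_le_iff_of_nonneg hr]
    intro i
    by_cases hi : i ∈ I
    · simpa [hi] using hu i hi
    · simpa [hi, abs_sub_comm] using hf i hi
  refine (norm_le_inverseBound_mul_norm_mulVec hκ hK (abs_faceMatrix_apply_le hK hA I)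
    (hdet.trans_eq (det_faceMatrix A I).symm) (u - w)).trans ?_
  gcongr
  exact inverseBound_nonneg _ hκ.le (zero_le_one.trans hK)

lemma norm_le (hw : IsFaceEquilibrium A m I w) (hκ : 0 < κ) (hK : 1 ≤ K)
    (hA : ∀ i j, |A i j| ≤ K) (hm : ∀ i, |m i| ≤ K)
    (hdet : κ ≤ (A.submatrix (↑) (↑) : Matrix ↥Iᶜ ↥Iᶜ ℝ).det) :
    ‖w‖ ≤ inverseBound (Fintype.card ι) κ K * K := by
  have hK₀ : 0 ≤ K := zero_le_one.trans hK
  simpa using hw.norm_sub_le_of_abs_le (u := 0) hκ hK hA hdet hK₀ (by simp [hK₀])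
    (by simp [hm])

lemma norm_residual_le (hw : IsFaceEquilibrium A m I w) (hκ : 0 < κ) (hK : 1 ≤ K)
    (hA : ∀ i j, |A i j| ≤ K) (hm : ∀ i, |m i| ≤ K)
    (hdet : κ ≤ (A.submatrix (↑) (↑) : Matrix ↥Iᶜ ↥Iᶜ ℝ).det) (u : ι → ℝ) :
    ‖m - A *ᵥ u‖ ≤
      K + Fintype.card ι * K * (‖u - w‖ + inverseBound (Fintype.card ι) κ K * K) := by
  have hK₀ : 0 ≤ K := zero_le_one.trans hK
  calc ‖m - A *ᵥ u‖ ≤ ‖m‖ + ‖A *ᵥ u‖ := norm_sub_le _ _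
    _ ≤ K + Fintype.card ι * K * ‖u‖ :=
      add_le_add ((pi_norm_le_iff_of_nonneg hK₀).2 hm) (norm_mulVec_le hK₀ hA u)
    _ ≤ K + Fintype.card ι * K * (‖u - w‖ + ‖w‖) := by
      gcongr
      simpa using norm_add_le (u - w) w
    _ ≤ _ := by
      gcongr
      exact hw.norm_le hκ hK hA hm hdet

lemma norm_sub_le_stabilityConstant_mul {u : ι → ℝ} {η : ℝ} (hw : IsFaceEquilibrium A m I w)
    (hκ : 0 < κ) (hK : 1 ≤ K) (hA : ∀ i j, |A i j| ≤ K) (hm : ∀ i, |m i| ≤ K)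
    (hdet : κ ≤ (A.submatrix (↑) (↑) : Matrix ↥Iᶜ ↥Iᶜ ℝ).det)
    (hη : 0 ≤ η) (hηΛ : stabilityConstant (Fintype.card ι) κ K * η ≤ 1)
    (hu : ∀ i ∈ I, |u i| ≤ η) (hf : ∀ j ∉ I, |(m - A *ᵥ u) j| ≤ η * ‖m - A *ᵥ u‖) :
    ‖u - w‖ ≤ stabilityConstant (Fintype.card ι) κ K * η := by
  have hK₀ : 0 ≤ K := zero_le_one.trans hK
  have hM := hw.norm_residual_le hκ hK hA hm hdet u
  have hD := hw.norm_sub_le_of_abs_le (r := η * (1 + ‖m - A *ᵥ u‖)) hκ hK hA hdet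
    (by positivity)
    (fun i hi => (hu i hi).trans (le_mul_of_one_le_right hη (by simp)))
    (fun j hj => (hf j hj).trans (by gcongr; simp))
  have hC : 0 ≤ inverseBound (Fintype.card ι) κ K := inverseBound_nonneg _ hκ.le hK₀
  unfold stabilityConstant at hηΛ ⊢
  set C := inverseBound (Fintype.card ι) κ K
  set L : ℝ := Fintype.card ι * K
  set D := ‖u - w‖
  have hL : 0 ≤ L := by positivity
  have habsorb : C * η * L * D ≤ 1 / 2 * D := by
    have : C * η * L ≤ C * η * (1 + K + L * (1 + C * K)) := by
      gcongr
      nlinarith [mul_nonneg hL (mul_nonneg hC hK₀)]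
    gcongr
    linarith
  have hsplit : D ≤ C * η * (1 + K + L * (C * K)) + C * η * L * D := calc
    D ≤ C * (η * (1 + (K + L * (D + C * K)))) := by
      refine hD.trans ?_
      gcongr
    _ = _ := by ring
  have hconst : C * η * (1 + K + L * (C * K)) ≤ C * η * (1 + K + L * (1 + C * K)) := by
    gcongr
    linarith
  linarith

end IsFaceEquilibrium

end FaceEquilibrium

section Concentration

variable {ι : Type*} [Fintype ι] {p η τ : ℝ} {u f : ι → ℝ}

lemma sum_abs_rpow_le (hp : 0 ≤ p) (f : ι → ℝ) :
    ∑ i, |f i| ^ p ≤ Fintype.card ι * ‖f‖ ^ p := by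
  rw [← nsmul_eq_mul]
  exact Finset.sum_le_card_nsmul _ _ _ fun i _ =>
    Real.rpow_le_rpow (abs_nonneg _) (norm_le_pi_norm f i) hp

lemma abs_le_mul_norm_of_sum_mul_rpow_le (hp : 0 < p) (hη : 0 < η) (hτ : 0 ≤ τ)
    (hu : ∀ i, 0 ≤ u i)
    (hv : ∑ i, u i * |f i| ^ p ≤ η * τ ^ p / Fintype.card ι * ∑ i, |f i| ^ p)
    {j : ι} (hj : η < u j) : |f j| ≤ τ * ‖f‖ := by
  have hcard : (Fintype.card ι : ℝ) ≠ 0 := by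
    have : Nonempty ι := ⟨j⟩
    exact_mod_cast Fintype.card_ne_zero
  have hpow : η * |f j| ^ p ≤ η * (τ * ‖f‖) ^ p := calc
    η * |f j| ^ p ≤ u j * |f j| ^ p := by gcongr
    _ ≤ ∑ i, u i * |f i| ^ p :=
      Finset.single_le_sum (f := fun i => u i * |f i| ^ p)
        (fun i _ => mul_nonneg (hu i) (by positivity)) (Finset.mem_univ j)
    _ ≤ η * τ ^ p / Fintype.card ι * (Fintype.card ι * ‖f‖ ^ p) := by
      refine hv.trans ?_
      gcongr
      exact sum_abs_rpow_le hp.le f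
    _ = η * (τ * ‖f‖) ^ p := by
      rw [Real.mul_rpow hτ (norm_nonneg f)]
      field_simp
  exact (Real.rpow_le_rpow_iff (abs_nonneg _) (by positivity) hp).1
    (le_of_mul_le_mul_left hpow hη)

lemma exists_mul_norm_lt_abs (hτ₀ : 0 ≤ τ) (hτ₁ : τ < 1) (hf : f ≠ 0) :
    ∃ i, τ * ‖f‖ < |f i| := by
  by_contra! h
  have hle : ‖f‖ ≤ τ * ‖f‖ := (pi_norm_le_iff_of_nonneg (by positivity)).2 h
  exact hle.not_gt (mul_lt_of_lt_one_left (norm_pos_iff.2 hf) hτ₁)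

end Concentration

section UniformEstimate

variable {ι : Type*} [Fintype ι]

lemma sqrt_sum_sq_le (x : ι → ℝ) :
    √(∑ i, x i ^ 2) ≤ √(Fintype.card ι) * ‖x‖ := by
  refine Real.sqrt_le_iff.2 ⟨by positivity, ?_⟩
  rw [mul_pow, Real.sq_sqrt (Nat.cast_nonneg _), ← nsmul_eq_mul]
  exact Finset.sum_le_card_nsmul _ _ _ fun i _ => sq_le_sq.2 <| by
    simpa using norm_le_pi_norm x i

variable [DecidableEq ι]

lemma exists_nonempty_forall_norm_sub_le {p κ K η : ℝ} (hp : 0 < p) (hκ : 0 < κ) (hK : 1 ≤ K)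
    (hη₀ : 0 < η) (hη₁ : η < 1)
    (hηΛ : stabilityConstant (Fintype.card ι) κ K * η ≤ 1)
    {A : Matrix ι ι ℝ} {m u : ι → ℝ} (hA : ∀ i j, |A i j| ≤ K) (hm : ∀ i, |m i| ≤ K)
    (hdet : ∀ s : Finset ι, κ ≤ (A.submatrix (↑) (↑) : Matrix s s ℝ).det)
    (hu : ∀ i, 0 ≤ u i) (hf : m - A *ᵥ u ≠ 0)
    (hv : ∑ i, u i * |(m - A *ᵥ u) i| ^ p ≤
      η * η ^ p / Fintype.card ι * ∑ i, |(m - A *ᵥ u) i| ^ p) :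
    ∃ I : Finset ι, I.Nonempty ∧ ∀ w, IsFaceEquilibrium A m I w →
      ‖u - w‖ ≤ stabilityConstant (Fintype.card ι) κ K * η := by
  have hsmall {j : ι} (hj : η < u j) : |(m - A *ᵥ u) j| ≤ η * ‖m - A *ᵥ u‖ :=
    abs_le_mul_norm_of_sum_mul_rpow_le hp hη₀ hη₀.le hu hv hj
  refine ⟨Finset.univ.filter (u · ≤ η), ?_, fun w hw => ?_⟩
  · obtain ⟨i, hi⟩ := exists_mul_norm_lt_abs hη₀.le hη₁ hf
    exact ⟨i, by simpa using not_lt.1 fun hηi => (hsmall hηi).not_gt hi⟩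
  · refine hw.norm_sub_le_stabilityConstant_mul hκ hK hA hm (hdet _) hη₀.le hηΛ ?_ ?_
    · simp [abs_of_nonneg (hu _)]
    · simpa using fun j hj => hsmall hj

theorem min_dist_to_uI_tendsto_zero_uniform_general [Nonempty ι] {p κ : ℝ} (K : ℝ) (hp : 0 < p)
    (hκ : 0 < κ) :
    ∀ ε : ℝ, 0 < ε → ∃ δ : ℝ, 0 < δ ∧
      ∀ (A : Matrix ι ι ℝ) (m : ι → ℝ), (∀ i j, |A i j| ≤ K) → (∀ i, |m i| ≤ K) →
        (∀ s : Finset ι, κ ≤ (A.submatrix (↑) (↑) : Matrix s s ℝ).det) →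
        ∀ uI : Finset ι → ι → ℝ, (∀ I, IsFaceEquilibrium A m I (uI I)) →
        ∀ u : ι → ℝ, (∀ i, 0 ≤ u i) → (∑ i, |(m - A *ᵥ u) i| ^ p) ≠ 0 →
          (∑ i, u i * |(m - A *ᵥ u) i| ^ p) ≤ δ * ∑ i, |(m - A *ᵥ u) i| ^ p →
          ∃ I : Finset ι, I.Nonempty ∧ √(∑ i, (u i - uI I i) ^ 2) ≤ ε := by
  intro ε hε
  set Λ := stabilityConstant (Fintype.card ι) κ (max 1 K)
  have hΛ : 0 ≤ Λ := stabilityConstant_nonneg _ hκ.le (by positivity)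
  obtain ⟨η, hη, hη_lt⟩ :=
    exists_pos_mul_lt (lt_min one_pos hε) (1 + Λ + √(Fintype.card ι) * Λ)
  obtain ⟨hη_one, hη_ε⟩ := lt_min_iff.1 hη_lt
  have hΛη : 0 ≤ Λ * η := by positivity
  have hcardΛη : 0 ≤ √(Fintype.card ι) * Λ * η := by positivity
  refine ⟨η * η ^ p / Fintype.card ι, by positivity, fun A m hA hm hdet uI huI u hu hg hv => ?_⟩
  have hf : m - A *ᵥ u ≠ 0 := by
    intro h
    simp only [h, Pi.zero_apply, abs_zero, Real.zero_rpow hp.ne', Finset.sum_const_zero,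
      ne_eq, not_true_eq_false] at hg
  obtain ⟨I, hI, hdist⟩ := exists_nonempty_forall_norm_sub_le hp hκ (le_max_left 1 K) hη
    (by linarith) (by linarith) (fun i j => (hA i j).trans (le_max_right 1 K))
    (fun i => (hm i).trans (le_max_right 1 K)) hdet hu hf hv
  refine ⟨I, hI, ?_⟩
  calc √(∑ i, (u i - uI I i) ^ 2) ≤ √(Fintype.card ι) * ‖u - uI I‖ := sqrt_sum_sq_le _
    _ ≤ √(Fintype.card ι) * (Λ * η) := by
      gcongr
      exact hdist _ (huI I)
    _ ≤ ε := by linarith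

end UniformEstimate

end

lemma minorM_empty {N : ℕ} (A : Matrix (Fin N) (Fin N) ℝ) (m : Fin N → ℝ) (j : Fin N) :
    minorM A m ∅ j = m j := by
  rw [minorM, Matrix.det_unique]
  rfl

lemma IsAdmissible.abs_m_le {N : ℕ} {κ : ℝ} {A : Matrix (Fin N) (Fin N) ℝ} {m : Fin N → ℝ}
    (h : IsAdmissible κ A m) (hκ : 0 < κ) (i : Fin N) : |m i| ≤ 1 / κ := by
  have hm : κ ≤ m i := minorM_empty A m i ▸ h.2.2.2 ∅ i (Finset.notMem_empty i)
  rw [abs_of_pos (hκ.trans_le hm)]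
  exact h.2.1 i

/-- `min_{I ≠ ∅} |u − u_I| → 0` as `v(u) → 0` over nonnegative `u`, uniformly in the
admissible coefficients: for every `ε > 0` there is `δ > 0` depending only on `ε`, `N`, `p`,
`κ` such that for every admissible pair, with `u_I` the solution of the system
`u_i = 0 (i ∈ I)`, `f_j(u) = 0 (j ∉ I)`, and for every nonnegative `u` with `g(u) ≠ 0` and
`Σ_i u_i |f_i(u)|^p ≤ δ g(u)`, there is a nonempty `I` with `|u − u_I| ≤ ε`. -/
theorem min_dist_to_uI_tendsto_zero_uniform {N : ℕ} (hN : 0 < N) (p κ : ℝ)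
    (hp : 1 ≤ p) (hκ : 0 < κ) :
    ∀ ε : ℝ, 0 < ε → ∃ δ : ℝ, 0 < δ ∧
      ∀ (A : Matrix (Fin N) (Fin N) ℝ) (m : Fin N → ℝ), IsAdmissible κ A m →
        ∀ uI : Finset (Fin N) → Fin N → ℝ,
          (∀ I : Finset (Fin N), (∀ i ∈ I, uI I i = 0) ∧ ∀ j ∉ I, fComp A m (uI I) j = 0) →
        ∀ u : Fin N → ℝ, (∀ i, 0 ≤ u i) → (∑ i, |fComp A m u i| ^ p) ≠ 0 →
          (∑ i, u i * |fComp A m u i| ^ p) ≤ δ * ∑ i, |fComp A m u i| ^ p →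
          ∃ I : Finset (Fin N), I.Nonempty ∧
            Real.sqrt (∑ i, (u i - uI I i) ^ 2) ≤ ε := by
  have : Nonempty (Fin N) := Fin.pos_iff_nonempty.1 hN
  intro ε hε
  obtain ⟨δ, hδ, h⟩ := min_dist_to_uI_tendsto_zero_uniform_general (ι := Fin N) (1 / κ)
    (zero_lt_one.trans_le hp) hκ ε hε
  exact ⟨δ, hδ, fun A m hadm => h A m hadm.1 (hadm.abs_m_le hκ) hadm.2.2.1⟩
end

section
/- Let (A, m) be an admissible pair with constant κ. Then for every I ⊆ {1,…,N}: (a) the linear system u_i = 0 (i ∈ I), f_j(u) = 0 (j ∉ I) has a unique solution u_I ∈ ℝ^N; (b) writing J for the complement of I, the solution is given by Cramer's rule: u_{I,i} = Δ_{J∖{i}, i} / Δ_J for i ∈ J and u_{I,i} = 0 for i ∈ I, and f_j(u_I) = Δ_{J, j} / Δ_J for j ∈ I; (c) there exist constants 0 < c ≤ C depending only on N and κ (not on the particular admissible coefficients) such that 0 ≤ u_{I,i} ≤ C and 0 ≤ f_j(u_I) ≤ C for all i, j, and moreover u_{I,j} ≥ c for every j ∉ I and f_i(u_I) ≥ c for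 every i ∈ I. -/
open MeasureTheory Filter

/-!
Bordering the principal minor over `s` is additive in the bordering column, so the splitting
`m = (m - A *ᵥ u) + A *ᵥ u` splits `Δ_{s,j}`. If `m - A *ᵥ u` vanishes on `s`, its part is
`(m - A *ᵥ u)_j Δ_s`; if `u` is supported in `s ∪ {j}`, column operations reduce the part of
`A *ᵥ u` to `u_j Δ_{s ∪ {j}}`. Hence
`Δ_{s,j} = (m - A *ᵥ u)_j Δ_s + u_j Δ_{s ∪ {j}}`.
For the solution supported in `J`, the choice `s = J`, `j ∉ J` kills the second term and the choice
`s = J ∖ {i}`, `j = i ∈ J` kills the first: these are the two Cramer formulas. In them every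
numerator and denominator is at least `κ` by hypothesis and, as a determinant of bounded size with
bounded entries, bounded above.
-/

open scoped Matrix

section Minors

variable {n R : Type*} [DecidableEq n] [CommRing R]

/-- The principal minor `Δ_s` of a matrix with arbitrary index type, over any commutative ring. -/
def principalMinor (A : Matrix n n R) (s : Finset n) : R :=
  (A.submatrix ((↑) : s → n) (↑)).det

/-- The principal submatrix of `A` on `s` with row and column `j` appended at the index `none`; this
is the principal submatrix on `insert j s` when `j ∉ s`. -/
def borderedSubmatrix (A : Matrix n n R) (s : Finset n) (j : n) :
    Matrix (Option s) (Option s) R :=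
  A.submatrix (Option.elim · j (↑)) (Option.elim · j (↑))

/-- The bordered minor `Δ_{s,j}`: the column `none` of `borderedSubmatrix A s j` is replaced by the
entries of `m`. -/
def borderedMinor (A : Matrix n n R) (m : n → R) (s : Finset n) (j : n) : R :=
  ((borderedSubmatrix A s j).updateCol none (m <| Option.elim · j (↑))).det

lemma det_borderedSubmatrix (A : Matrix n n R) {s : Finset n} {j : n} (hj : j ∉ s) :
    (borderedSubmatrix A s j).det = principalMinor A (insert j s) := by
  rw [principalMinor, ← Matrix.det_submatrix_equiv_self (Finset.subtypeInsertEquivOption hj).symm]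
  congr 1
  ext (_ | k) (_ | l) <;> rfl

lemma borderedMinor_add (A : Matrix n n R) (v w : n → R) (s : Finset n) (j : n) :
    borderedMinor A (v + w) s j = borderedMinor A v s j + borderedMinor A w s j :=
  Matrix.det_updateCol_add _ _ _ _

lemma borderedMinor_of_forall_mem_eq_zero (A : Matrix n n R) {m : n → R} {s : Finset n} (j : n)
    (hm : ∀ i ∈ s, m i = 0) : borderedMinor A m s j = m j * principalMinor A s := by
  have reindex : (borderedSubmatrix A s j).updateCol none (m <| Option.elim · j (↑)) =
      (Matrix.fromBlocks (A.submatrix ((↑) : s → n) (↑)) 0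
        (Matrix.of fun (_ : Unit) (l : s) => A j l) (Matrix.of fun _ _ => m j)).submatrix
          (Equiv.optionEquivSumPUnit s) (Equiv.optionEquivSumPUnit s) := by
    ext (_ | k) (_ | l) <;> simp [borderedSubmatrix, hm]
  rw [borderedMinor, reindex, Matrix.det_submatrix_equiv_self, Matrix.det_fromBlocks_zero₁₂,
    Matrix.det_unique (n := Unit), Matrix.of_apply, mul_comm, principalMinor]

lemma principalMinor_empty (A : Matrix n n R) : principalMinor A ∅ = 1 :=
  Matrix.det_isEmpty

lemma borderedMinor_empty (A : Matrix n n R) (m : n → R) (j : n) : borderedMinor A m ∅ j = m j := by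
  rw [borderedMinor_of_forall_mem_eq_zero A j (by simp), principalMinor_empty, mul_one]

variable [Fintype n]

lemma mulVec_apply_eq_sum_option (A : Matrix n n R) {u : n → R} {s : Finset n} {j : n}
    (hj : j ∉ s) (hu : ∀ i ∉ insert j s, u i = 0) (k : n) :
    (A *ᵥ u) k = ∑ l : Option s, u (l.elim j (↑)) * A k (l.elim j (↑)) := by
  calc (A *ᵥ u) k = ∑ i, u i * A k i := by simp only [Matrix.mulVec, dotProduct, mul_comm]
    _ = ∑ i ∈ insert j s, u i * A k i :=
      (Finset.sum_subset (Finset.subset_univ _) fun i _ hi => by rw [hu i hi, zero_mul]).symm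
    _ = ∑ l : Option s, u (l.elim j (↑)) * A k (l.elim j (↑)) := by
      rw [Finset.sum_insert hj, Fintype.sum_option, ← Finset.sum_coe_sort s]
      rfl

lemma borderedMinor_mulVec (A : Matrix n n R) {u : n → R} {s : Finset n} {j : n} (hj : j ∉ s)
    (hu : ∀ i ∉ insert j s, u i = 0) :
    borderedMinor A (A *ᵥ u) s j = u j * principalMinor A (insert j s) := by
  simp only [borderedMinor, mulVec_apply_eq_sum_option A hj hu]
  exact (Matrix.det_updateCol_sum (borderedSubmatrix A s j) none (u <| Option.elim · j (↑))).trans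
    (congrArg (u j * ·) (det_borderedSubmatrix A hj))

theorem borderedMinor_eq_residual_add (A : Matrix n n R) {m u : n → R} {s : Finset n} {j : n}
    (hj : j ∉ s) (hu : ∀ i ∉ insert j s, u i = 0) (hres : ∀ i ∈ s, (m - A *ᵥ u) i = 0) :
    borderedMinor A m s j =
      (m - A *ᵥ u) j * principalMinor A s + u j * principalMinor A (insert j s) := by
  rw [← borderedMinor_of_forall_mem_eq_zero A j hres, ← borderedMinor_mulVec A hj hu,
    ← borderedMinor_add, sub_add_cancel]

end Minors

section BasicSolution

variable {n R : Type*} [Fintype n] [DecidableEq n] [CommRing R]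
  {A : Matrix n n R} {m u : n → R} {s : Finset n} {i j : n}

/-- `u` is the basic solution with support `s`, in the sense of linear complementarity problems: it
vanishes off `s` and its residual `m - A *ᵥ u` vanishes on `s`. The state `u_I` of the paper is the
one with support `Iᶜ`. -/
def IsBasicSolution (A : Matrix n n R) (m : n → R) (s : Finset n) (u : n → R) : Prop :=
  (∀ i ∉ s, u i = 0) ∧ ∀ j ∈ s, (m - A *ᵥ u) j = 0

/-- The coefficient matrix of the square linear system satisfied by basic solutions with support
`s`: the rows of `A` in `s` and those of the identity matrix off `s`. -/
def basicMatrix (A : Matrix n n R) (s : Finset n) : Matrix n n R :=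
  Matrix.of fun i => if i ∈ s then A i else (1 : Matrix n n R) i

lemma isBasicSolution_iff_basicMatrix_mulVec_eq :
    IsBasicSolution A m s u ↔ basicMatrix A s *ᵥ u = s.piecewise m 0 := by
  have row (i : n) : (basicMatrix A s *ᵥ u) i = if i ∈ s then (A *ᵥ u) i else u i := by
    by_cases hi : i ∈ s
    · simp [basicMatrix, Matrix.mulVec, hi]
    · simpa [basicMatrix, Matrix.mulVec, hi] using congrFun (Matrix.one_mulVec u) i
  simp only [funext_iff, row, Finset.piecewise, IsBasicSolution, Pi.sub_apply, sub_eq_zero]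
  refine ⟨fun ⟨hu, hres⟩ i => ?_, fun h => ⟨fun i hi => ?_, fun i hi => ?_⟩⟩
  · by_cases hi : i ∈ s <;> simp [hi, hu, hres]
  · simpa [hi] using h i
  · simpa [hi, eq_comm] using h i

lemma det_basicMatrix (A : Matrix n n R) (s : Finset n) :
    (basicMatrix A s).det = principalMinor A s := by
  have block_mem : (basicMatrix A s).toSquareBlockProp (· ∈ s) = A.submatrix (↑) (↑) := by
    ext k l
    simp [basicMatrix, Matrix.toSquareBlockProp]
  have block_notMem : (basicMatrix A s).toSquareBlockProp (· ∉ s) = 1 := by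
    ext k l
    simp [basicMatrix, Matrix.toSquareBlockProp, k.2, Matrix.one_apply, Subtype.ext_iff]
  have block_zero : ∀ i ∉ s, ∀ j ∈ s, basicMatrix A s i j = 0 := fun i hi j hj => by
    simp [basicMatrix, hi, Matrix.one_apply_ne (ne_of_mem_of_not_mem hj hi).symm]
  rw [Matrix.twoBlockTriangular_det _ (· ∈ s) block_zero, block_mem, block_notMem, Matrix.det_one,
    mul_one, principalMinor]
  -- The two determinants still differ in the `Fintype` instance on the subtype.
  congr!

theorem existsUnique_isBasicSolution (m : n → R) (hs : IsUnit (principalMinor A s)) :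
    ∃! u, IsBasicSolution A m s u := by
  have hunit : IsUnit (basicMatrix A s) := by
    rwa [Matrix.isUnit_iff_isUnit_det, det_basicMatrix]
  simp only [isBasicSolution_iff_basicMatrix_mulVec_eq]
  exact Function.Bijective.existsUnique
    ⟨Matrix.mulVec_injective_of_isUnit hunit, Matrix.mulVec_surjective_iff_isUnit.2 hunit⟩ _

namespace IsBasicSolution

theorem apply_mul_principalMinor (hu : IsBasicSolution A m s u) (hi : i ∈ s) :
    u i * principalMinor A s = borderedMinor A m (s.erase i) i := by
  have hins : insert i (s.erase i) = s := Finset.insert_erase hi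
  rw [borderedMinor_eq_residual_add A (Finset.notMem_erase i s) (by rw [hins]; exact hu.1)
    fun k hk => hu.2 k (Finset.mem_of_mem_erase hk), hins, hu.2 i hi, zero_mul, zero_add]

theorem residual_mul_principalMinor (hu : IsBasicSolution A m s u) (hj : j ∉ s) :
    (m - A *ᵥ u) j * principalMinor A s = borderedMinor A m s j := by
  rw [borderedMinor_eq_residual_add A hj
    (fun i hi => hu.1 i fun his => hi (Finset.mem_insert_of_mem his)) hu.2, hu.1 j hj, zero_mul,
    add_zero]

end IsBasicSolution

end BasicSolution

section Bounds

variable {n K : Type*} [DecidableEq n] [Field K] [LinearOrder K]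
  {κ : K} {A : Matrix n n K} {m : n → K} {s : Finset n} {j : n}

/-- Admissibility with constant `κ`, for an arbitrary index type and ordered field. -/
structure IsAdmissiblePair (κ : K) (A : Matrix n n K) (m : n → K) : Prop where
  abs_entry_le : ∀ i j, |A i j| ≤ 1 / κ
  rhs_le : ∀ i, m i ≤ 1 / κ
  le_principalMinor : ∀ s, κ ≤ principalMinor A s
  le_borderedMinor : ∀ s, ∀ j ∉ s, κ ≤ borderedMinor A m s j

lemma IsAdmissiblePair.principalMinor_ne_zero (hκ : 0 < κ) (h : IsAdmissiblePair κ A m)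
    (s : Finset n) : principalMinor A s ≠ 0 :=
  (hκ.trans_le (h.le_principalMinor s)).ne'

variable [IsStrictOrderedRing K]

lemma IsAdmissiblePair.abs_rhs_le (hκ : 0 < κ) (h : IsAdmissiblePair κ A m) (i : n) :
    |m i| ≤ 1 / κ := by
  have hm : κ ≤ m i := by
    simpa only [borderedMinor_empty] using h.le_borderedMinor ∅ i (Finset.notMem_empty i)
  rw [abs_of_pos (hκ.trans_le hm)]
  exact h.rhs_le i

/-- An upper bound for all minors of order at most `N` whose entries are at most `1 / κ` in absolute
value. The maximum with `1` makes the bound monotone in the order. -/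
def minorBound (N : ℕ) (κ : K) : K :=
  N.factorial * max 1 (1 / κ) ^ N

/-- The constant `C` of the theorem: an upper bound for the quotients of two minors lying between
`κ` and `minorBound N κ`. -/
def quotientBound (N : ℕ) (κ : K) : K :=
  minorBound N κ * max 1 (1 / κ)

lemma one_le_minorBound (N : ℕ) (κ : K) : 1 ≤ minorBound N κ :=
  one_le_mul_of_one_le_of_one_le (by exact_mod_cast N.factorial_pos)
    (one_le_pow₀ (le_max_left _ _))

lemma one_le_quotientBound (N : ℕ) (κ : K) : 1 ≤ quotientBound N κ :=
  one_le_mul_of_one_le_of_one_le (one_le_minorBound N κ) (le_max_left _ _)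

lemma div_le_quotientBound {N : ℕ} (hκ : 0 < κ) {p q : K} (hp : p ≤ minorBound N κ) (hq : κ ≤ q) :
    p / q ≤ quotientBound N κ := by
  have hM : 0 ≤ minorBound N κ := zero_le_one.trans (one_le_minorBound N κ)
  calc p / q ≤ minorBound N κ / κ := div_le_div₀ hM hp hκ hq
    _ = minorBound N κ * (1 / κ) := by rw [mul_one_div]
    _ ≤ quotientBound N κ := mul_le_mul_of_nonneg_left (le_max_right _ _) hM

variable [Fintype n]

lemma abs_det_le_factorial_mul_pow {N : ℕ} (hn : Fintype.card n ≤ N) {b : K} (hb : 1 ≤ b)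
    {B : Matrix n n K} (hB : ∀ i j, |B i j| ≤ b) :
    |B.det| ≤ N.factorial * b ^ N := by
  calc |B.det| ≤ (Fintype.card n).factorial • b ^ Fintype.card n :=
      Matrix.det_le (abv := AbsoluteValue.abs) hB
    _ ≤ N.factorial * b ^ N := by
      rw [nsmul_eq_mul]
      gcongr

namespace IsAdmissiblePair

lemma principalMinor_le (h : IsAdmissiblePair κ A m) (s : Finset n) :
    principalMinor A s ≤ minorBound (Fintype.card n) κ := by
  have hcard : Fintype.card s ≤ Fintype.card n := by
    simpa only [Fintype.card_coe] using s.card_le_univ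
  exact (le_abs_self _).trans <| abs_det_le_factorial_mul_pow hcard (le_max_left _ _)
    fun k l => (h.abs_entry_le k l).trans (le_max_right _ _)

lemma borderedMinor_le (hκ : 0 < κ) (h : IsAdmissiblePair κ A m) (hj : j ∉ s) :
    borderedMinor A m s j ≤ minorBound (Fintype.card n) κ := by
  have hcard : Fintype.card (Option s) ≤ Fintype.card n := by
    simpa only [Fintype.card_option, Fintype.card_coe, Finset.card_insert_of_notMem hj] using
      (insert j s).card_le_univ
  refine (le_abs_self _).trans <| abs_det_le_factorial_mul_pow hcard (le_max_left _ _) fun k l => ?_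
  refine le_trans ?_ (le_max_right 1 (1 / κ))
  cases l with
  | none => simpa only [Matrix.updateCol_self] using h.abs_rhs_le hκ _
  | some l =>
    rw [Matrix.updateCol_ne (Option.some_ne_none l)]
    exact h.abs_entry_le _ _

lemma borderedMinor_div_principalMinor_mem_Icc (hκ : 0 < κ) (h : IsAdmissiblePair κ A m)
    (hj : j ∉ s) (t : Finset n) :
    borderedMinor A m s j / principalMinor A t ∈
      Set.Icc (quotientBound (Fintype.card n) κ)⁻¹ (quotientBound (Fintype.card n) κ) := by
  have hs := h.le_borderedMinor s j hj
  have ht := h.le_principalMinor t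
  refine ⟨?_, div_le_quotientBound hκ (h.borderedMinor_le hκ hj) ht⟩
  rw [← inv_div]
  exact inv_anti₀ (div_pos (hκ.trans_le ht) (hκ.trans_le hs))
    (div_le_quotientBound hκ (h.principalMinor_le t) hs)

end IsAdmissiblePair

end Bounds

theorem uI_exists_unique_cramer_bounds_general (n : Type*) [Fintype n] [DecidableEq n] {K : Type*}
    [Field K] [LinearOrder K] [IsStrictOrderedRing K] {κ : K} (hκ : 0 < κ) :
    ∃ c C : K, 0 < c ∧ c ≤ C ∧
      ∀ (A : Matrix n n K) (m : n → K), IsAdmissiblePair κ A m → ∀ s : Finset n,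
        (∃! u, IsBasicSolution A m s u) ∧
        ∀ u, IsBasicSolution A m s u →
          (∀ i ∈ s, u i = borderedMinor A m (s.erase i) i / principalMinor A s) ∧
          (∀ j ∉ s, (m - A *ᵥ u) j = borderedMinor A m s j / principalMinor A s) ∧
          (∀ i, 0 ≤ u i ∧ u i ≤ C) ∧
          (∀ j, 0 ≤ (m - A *ᵥ u) j ∧ (m - A *ᵥ u) j ≤ C) ∧
          (∀ j ∈ s, c ≤ u j) ∧
          (∀ i ∉ s, c ≤ (m - A *ᵥ u) i) := by
  set C := quotientBound (Fintype.card n) κ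
  have hC : 1 ≤ C := one_le_quotientBound _ κ
  have hc : 0 < C⁻¹ := inv_pos.2 (zero_lt_one.trans_le hC)
  refine ⟨C⁻¹, C, hc, (inv_le_one_of_one_le₀ hC).trans hC, fun A m h s => ?_⟩
  have hs := h.principalMinor_ne_zero hκ s
  refine ⟨existsUnique_isBasicSolution m hs.isUnit, fun u hu => ?_⟩
  have cramer_u : ∀ i ∈ s, u i = borderedMinor A m (s.erase i) i / principalMinor A s :=
    fun i hi => eq_div_of_mul_eq hs (hu.apply_mul_principalMinor hi)
  have cramer_f : ∀ j ∉ s, (m - A *ᵥ u) j = borderedMinor A m s j / principalMinor A s :=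
    fun j hj => eq_div_of_mul_eq hs (hu.residual_mul_principalMinor hj)
  have bounds_u (i) (hi : i ∈ s) : u i ∈ Set.Icc C⁻¹ C :=
    cramer_u i hi ▸ h.borderedMinor_div_principalMinor_mem_Icc hκ (s.notMem_erase i) s
  have bounds_f (j) (hj : j ∉ s) : (m - A *ᵥ u) j ∈ Set.Icc C⁻¹ C :=
    cramer_f j hj ▸ h.borderedMinor_div_principalMinor_mem_Icc hκ hj s
  have hC0 : 0 ≤ C := zero_le_one.trans hC
  refine ⟨cramer_u, cramer_f, fun i => ?_, fun j => ?_, fun j hj => (bounds_u j hj).1,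
    fun i hi => (bounds_f i hi).1⟩
  · by_cases hi : i ∈ s
    · exact Set.Icc_subset_Icc_left hc.le (bounds_u i hi)
    · simp only [hu.1 i hi, le_refl, hC0, and_self]
  · by_cases hj : j ∈ s
    · simp only [hu.2 j hj, le_refl, hC0, and_self]
    · exact Set.Icc_subset_Icc_left hc.le (bounds_f j hj)

lemma minorP_eq_principalMinor {N : ℕ} (A : Matrix (Fin N) (Fin N) ℝ) (I : Finset (Fin N)) :
    minorP A I = principalMinor A I :=
  rfl

lemma fComp_eq_residual {N : ℕ} (A : Matrix (Fin N) (Fin N) ℝ) (m u : Fin N → ℝ) (i : Fin N) :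
    fComp A m u i = (m - A *ᵥ u) i :=
  rfl

lemma minorM_eq_borderedMinor {N : ℕ} (A : Matrix (Fin N) (Fin N) ℝ) (m : Fin N → ℝ)
    (I : Finset (Fin N)) (j : Fin N) : minorM A m I j = borderedMinor A m I j := by
  rw [minorM, borderedMinor]
  congr 1
  ext (_ | k) (_ | l) <;> rfl

lemma IsAdmissible.isAdmissiblePair {N : ℕ} {κ : ℝ} {A : Matrix (Fin N) (Fin N) ℝ}
    {m : Fin N → ℝ} (h : IsAdmissible κ A m) : IsAdmissiblePair κ A m where
  abs_entry_le := h.1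
  rhs_le := h.2.1
  le_principalMinor := h.2.2.1
  le_borderedMinor s j hj := minorM_eq_borderedMinor A m s j ▸ h.2.2.2 s j hj

/-- For an admissible pair `(A, m)` and any index set `I`:
(a) the system `u_i = 0 (i ∈ I)`, `f_j(u) = 0 (j ∉ I)` has a unique solution `u_I`;
(b) the solution is given by Cramer's rule via the determinants `Δ`;
(c) uniformly in the admissible coefficients, `0 ≤ u_{I,i} ≤ C`, `0 ≤ f_j(u_I) ≤ C`,
`u_{I,j} ≥ c` for `j ∉ I` and `f_i(u_I) ≥ c` for `i ∈ I`, with `0 < c ≤ C` depending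
only on `N` and `κ`. -/
theorem uI_exists_unique_cramer_bounds {N : ℕ} (hN : 0 < N) (κ : ℝ) (hκ : 0 < κ) :
    ∃ c C : ℝ, 0 < c ∧ c ≤ C ∧
      ∀ (A : Matrix (Fin N) (Fin N) ℝ) (m : Fin N → ℝ), IsAdmissible κ A m →
        ∀ I : Finset (Fin N),
          (∃! u : Fin N → ℝ, (∀ i ∈ I, u i = 0) ∧ ∀ j ∉ I, fComp A m u j = 0) ∧
          ∀ u : Fin N → ℝ, ((∀ i ∈ I, u i = 0) ∧ ∀ j ∉ I, fComp A m u j = 0) →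
            (∀ i ∉ I, u i = minorM A m (Iᶜ.erase i) i / minorP A Iᶜ) ∧
            (∀ j ∈ I, fComp A m u j = minorM A m Iᶜ j / minorP A Iᶜ) ∧
            (∀ i, 0 ≤ u i ∧ u i ≤ C) ∧
            (∀ j, 0 ≤ fComp A m u j ∧ fComp A m u j ≤ C) ∧
            (∀ j ∉ I, c ≤ u j) ∧
            (∀ i ∈ I, c ≤ fComp A m u i) := by
  obtain ⟨c, C, hc, hcC, h⟩ := uI_exists_unique_cramer_bounds_general (Fin N) hκ
  refine ⟨c, C, hc, hcC, fun A m hA I => ?_⟩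
  simp only [minorP_eq_principalMinor, minorM_eq_borderedMinor, fComp_eq_residual]
  simpa only [IsBasicSolution, Finset.mem_compl, not_not] using h A m hA.isAdmissiblePair Iᶜ
end
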